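/- arXiv:1909.06648 — 2 statements merged into one kernel-verified Lean document; each statement's English description precedes it below -/
import Mathlib

section
/- Let m ∈ [0,1/3]. For every (a,b) ∈ Δ_m, Spearman's footrule satisfies φ(C̲^{(a,b)}_m) ≥ −1/2 if 0 ≤ m ≤ 1/4 and φ(C̲^{(a,b)}_m) ≥ 24m² − 12m + 1 if 1/4 ≤ m ≤ 1/3, with equality at (a,b) = (m, 1−m); and φ(C̄^{(a,b)}_m) ≤ 1 − 12m², with equality at (a,b) = (m, 2m). -/
open Set MeasureTheory intervalIntegral

/-- A bivariate copula: boundary conditions plus the 2-increasing property. -/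
def IsCopula (C : ℝ → ℝ → ℝ) : Prop :=
  (∀ u ∈ Set.Icc (0:ℝ) 1, C u 0 = 0 ∧ C 0 u = 0 ∧ C u 1 = u ∧ C 1 u = u) ∧
  ∀ u₁ u₂ v₁ v₂ : ℝ, 0 ≤ u₁ → u₁ ≤ u₂ → u₂ ≤ 1 → 0 ≤ v₁ → v₁ ≤ v₂ → v₂ ≤ 1 →
    0 ≤ C u₂ v₂ - C u₂ v₁ - C u₁ v₂ + C u₁ v₁

/-- The lower bound function C̲^{(a,b)}_c. -/
noncomputable def lowerC (a b c : ℝ) : ℝ → ℝ → ℝ := fun u v =>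
  max (max (u + v - 1) 0)
    (min (min (max (a + b - 1) 0 + c) (u - a + (max (a + b - 1) 0 + c)))
      (min (v - b + (max (a + b - 1) 0 + c)) (u + v - a - b + (max (a + b - 1) 0 + c))))

/-- The upper bound function C̄^{(a,b)}_c. -/
noncomputable def upperC (a b c : ℝ) : ℝ → ℝ → ℝ := fun u v =>
  min (min u v)
    (max (max (min a b - c) (u - b + (min a b - c)))
      (max (v - a + (min a b - c)) (u + v - a - b + (min a b - c))))

/-- Spearman's rho of a copula. -/
noncomputable def spearmanRho (C : ℝ → ℝ → ℝ) : ℝ :=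
  12 * (∫ u in (0:ℝ)..1, ∫ v in (0:ℝ)..1, C u v) - 3

/-- Spearman's footrule of a copula. -/
noncomputable def spearmanFootrule (C : ℝ → ℝ → ℝ) : ℝ :=
  6 * (∫ u in (0:ℝ)..1, C u u) - 2

/-- Gini's gamma of a copula. -/
noncomputable def giniGamma (C : ℝ → ℝ → ℝ) : ℝ :=
  4 * (∫ u in (0:ℝ)..1, (C u u + C u (1 - u))) - 2

/-- Blomqvist's beta of a copula. -/
noncomputable def blomqvistBeta (C : ℝ → ℝ → ℝ) : ℝ :=
  4 * C (1/2) (1/2) - 1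

theorem integral_max_sub_zero {c : ℝ} (h0 : 0 ≤ c) (h1 : c ≤ 1) :
    ∫ u in (0:ℝ)..1, max (u - c) 0 = (1 - c) ^ 2 / 2 := by
  have hi (x y : ℝ) : IntervalIntegrable (fun u : ℝ => max (u - c) 0) volume x y :=
    Continuous.intervalIntegrable (by fun_prop) _ _
  have hl : ∫ u in (0:ℝ)..c, max (u - c) 0 = ∫ _u in (0:ℝ)..c, (0:ℝ) := by
    refine intervalIntegral.integral_congr fun u hu => ?_
    rw [uIcc_of_le h0] at hu
    exact max_eq_right (by linarith [hu.2])
  have hr : ∫ u in c..1, max (u - c) 0 = ∫ u in c..1, (u - c) := by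
    refine intervalIntegral.integral_congr fun u hu => ?_
    rw [uIcc_of_le h1] at hu
    exact max_eq_left (by linarith [hu.1])
  rw [← integral_add_adjacent_intervals (hi 0 c) (hi c 1), hl, hr,
    intervalIntegral.integral_sub (by simp) (by simp)]
  simp
  ring

/-- On the diagonal, the lower bound function decreases as `(a, b)` moves to `(m, 1 - m)`. -/
theorem lowerC_corner_le_diag {a b m : ℝ} (ha : m ≤ a) (hab : m ≤ b - a)
    (hs : a + b ≤ 1) (u : ℝ) : lowerC m (1 - m) m u u ≤ lowerC a b m u u := by
  have h₁ : max (m + (1 - m) - 1) 0 = 0 := by simp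
  have h₂ : max (a + b - 1) 0 = 0 := max_eq_right (by linarith)
  simp only [lowerC, h₁, h₂, zero_add]
  refine max_le_max le_rfl (le_min (le_min ?_ ?_) (le_min ?_ ?_))
  · simp
  · refine (min_le_right _ _).trans ((min_le_left _ _).trans ?_)
    linarith
  · refine (min_le_right _ _).trans ((min_le_left _ _).trans ?_)
    linarith
  · refine (min_le_right _ _).trans ((min_le_right _ _).trans ?_)
    linarith

theorem lowerC_corner_diag_of_le {m : ℝ} (hm : 0 ≤ m) (h : m ≤ 1 / 4) (u : ℝ) :
    lowerC m (1 - m) m u u = 2 * max (u - 1 / 2) 0 := by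
  have h₁ : max (m + (1 - m) - 1) 0 = 0 := by simp
  simp only [lowerC, h₁, zero_add]
  grind

theorem lowerC_corner_diag_of_ge {m : ℝ} (h : 1 / 4 ≤ m) (h' : m ≤ 1 / 3) (u : ℝ) :
    lowerC m (1 - m) m u u = max (u - (1 - 2 * m)) 0 + max (u - 2 * m) 0 := by
  have h₁ : max (m + (1 - m) - 1) 0 = 0 := by simp
  simp only [lowerC, h₁, zero_add]
  grind

theorem upperC_diag {a b m : ℝ} (hm : 0 ≤ m) (hab : a ≤ b) (u : ℝ) :
    upperC a b m u u =
      u - max (u - (a - m)) 0 + max (u - a) 0 + max (u - b) 0 - max (u - (b + m)) 0 := by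
  simp only [upperC, min_eq_left hab, min_self]
  grind

theorem continuous_lowerC_diag (a b m : ℝ) : Continuous fun u => lowerC a b m u u := by
  unfold lowerC
  fun_prop

theorem footrule_lowerC_corner_le {a b m : ℝ} (ha : m ≤ a) (hab : m ≤ b - a)
    (hs : a + b ≤ 1) :
    spearmanFootrule (lowerC m (1 - m) m) ≤ spearmanFootrule (lowerC a b m) := by
  have := intervalIntegral.integral_mono (μ := volume) (zero_le_one' ℝ)
    ((continuous_lowerC_diag m (1 - m) m).intervalIntegrable 0 1)
    ((continuous_lowerC_diag a b m).intervalIntegrable 0 1) (lowerC_corner_le_diag ha hab hs)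
  unfold spearmanFootrule
  linarith

theorem footrule_lowerC_corner_of_le {m : ℝ} (hm : 0 ≤ m) (h : m ≤ 1 / 4) :
    spearmanFootrule (lowerC m (1 - m) m) = -(1 / 2) := by
  simp only [spearmanFootrule, lowerC_corner_diag_of_le hm h, intervalIntegral.integral_const_mul]
  rw [integral_max_sub_zero (by norm_num) (by norm_num)]
  norm_num

theorem footrule_lowerC_corner_of_ge {m : ℝ} (h : 1 / 4 ≤ m) (h' : m ≤ 1 / 3) :
    spearmanFootrule (lowerC m (1 - m) m) = 24 * m ^ 2 - 12 * m + 1 := by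
  simp only [spearmanFootrule, lowerC_corner_diag_of_ge h h']
  rw [intervalIntegral.integral_add (Continuous.intervalIntegrable (by fun_prop) _ _)
      (Continuous.intervalIntegrable (by fun_prop) _ _),
    integral_max_sub_zero (by linarith) (by linarith),
    integral_max_sub_zero (by linarith) (by linarith)]
  ring

theorem footrule_upperC {a b m : ℝ} (hm : 0 ≤ m) (ha : m ≤ a) (hab : a ≤ b) (hb : b + m ≤ 1) :
    spearmanFootrule (upperC a b m) = 1 - 6 * m ^ 2 - 6 * m * (b - a) := by
  simp only [spearmanFootrule, upperC_diag hm hab]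
  rw [intervalIntegral.integral_sub (Continuous.intervalIntegrable (by fun_prop) _ _)
      (Continuous.intervalIntegrable (by fun_prop) _ _),
    intervalIntegral.integral_add (Continuous.intervalIntegrable (by fun_prop) _ _)
      (Continuous.intervalIntegrable (by fun_prop) _ _),
    intervalIntegral.integral_add (Continuous.intervalIntegrable (by fun_prop) _ _)
      (Continuous.intervalIntegrable (by fun_prop) _ _),
    intervalIntegral.integral_sub (Continuous.intervalIntegrable (by fun_prop) _ _)
      (Continuous.intervalIntegrable (by fun_prop) _ _),
    integral_max_sub_zero (by linarith) (by linarith),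
    integral_max_sub_zero (by linarith) (by linarith),
    integral_max_sub_zero (by linarith) (by linarith),
    integral_max_sub_zero (by linarith) (by linarith), integral_id]
  ring

theorem footrule_bounds_on_triangle (m : ℝ) (hm : m ∈ Set.Icc (0:ℝ) (1/3)) :
    (∀ a b : ℝ, a ∈ Set.Icc (0:ℝ) 1 → b ∈ Set.Icc (0:ℝ) 1 →
      m ≤ a → m ≤ b - a → a + b ≤ 1 →
      ((m ≤ 1/4 → -(1/2) ≤ spearmanFootrule (lowerC a b m)) ∧
       (1/4 ≤ m → 24 * m^2 - 12 * m + 1 ≤ spearmanFootrule (lowerC a b m)) ∧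
       spearmanFootrule (upperC a b m) ≤ 1 - 12 * m^2)) ∧
    (m ≤ 1/4 → spearmanFootrule (lowerC m (1 - m) m) = -(1/2)) ∧
    (1/4 ≤ m → spearmanFootrule (lowerC m (1 - m) m) = 24 * m^2 - 12 * m + 1) ∧
    spearmanFootrule (upperC m (2 * m) m) = 1 - 12 * m^2 := by
  obtain ⟨h0, h3⟩ := hm
  refine ⟨fun a b _ _ ha hab hs => ⟨fun h => ?_, fun h => ?_, ?_⟩,
    footrule_lowerC_corner_of_le h0, fun h => footrule_lowerC_corner_of_ge h h3, ?_⟩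
  · exact (footrule_lowerC_corner_of_le h0 h).symm.trans_le
      (footrule_lowerC_corner_le ha hab hs)
  · exact (footrule_lowerC_corner_of_ge h h3).symm.trans_le
      (footrule_lowerC_corner_le ha hab hs)
  · rw [footrule_upperC h0 ha (by linarith) (by linarith)]
    nlinarith [mul_le_mul_of_nonneg_left hab h0]
  · rw [footrule_upperC h0 le_rfl (by linarith) (by linarith)]
    ring
end

section
/- Let C be a copula and let f = φ(C) be its Spearman's footrule. Then for all (u,v) ∈ [0,1]²: if −1/2 ≤ f ≤ −1/3 then |C(u,v) − C(v,u)| ≤ (3 + √(3 + 6f))/12, and if −1/3 ≤ f ≤ 1 then |C(u,v) − C(v,u)| ≤ √((1 − f)/12). -/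
open Set MeasureTheory intervalIntegral

theorem integral_affine (α β p q : ℝ) :
    ∫ u in p..q, (α * u + β) = α * (q ^ 2 - p ^ 2) / 2 + β * (q - p) := by
  rw [intervalIntegral.integral_add
      (Continuous.intervalIntegrable (by fun_prop) _ _) intervalIntegrable_const,
    intervalIntegral.integral_const_mul, integral_id, intervalIntegral.integral_const, smul_eq_mul]
  ring

namespace IsCopula

variable {C : ℝ → ℝ → ℝ}

theorem transpose (hC : IsCopula C) : IsCopula fun u v => C v u := by
  refine ⟨fun u hu => ?_, fun u₁ u₂ v₁ v₂ h₁ h₂ h₃ h₄ h₅ h₆ => ?_⟩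
  · obtain ⟨h₁, h₂, h₃, h₄⟩ := hC.1 u hu
    exact ⟨h₂, h₁, h₄, h₃⟩
  · linarith [hC.2 v₁ v₂ u₁ u₂ h₄ h₅ h₆ h₁ h₂ h₃]

theorem nonneg (hC : IsCopula C) {u v : ℝ} (hu : u ∈ Icc (0:ℝ) 1) (hv : v ∈ Icc (0:ℝ) 1) :
    0 ≤ C u v := by
  have h := hC.2 0 u 0 v le_rfl hu.1 hu.2 le_rfl hv.1 hv.2
  have h₀ := (hC.1 0 ⟨le_rfl, zero_le_one⟩).1
  linarith [(hC.1 u hu).1, (hC.1 v hv).2.1]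

theorem le_left (hC : IsCopula C) {u v : ℝ} (hu : u ∈ Icc (0:ℝ) 1) (hv : v ∈ Icc (0:ℝ) 1) :
    C u v ≤ u := by
  have h := hC.2 0 u v 1 le_rfl hu.1 hu.2 hv.1 hv.2 le_rfl
  have h₀ := (hC.1 1 ⟨zero_le_one, le_rfl⟩).2.1
  linarith [(hC.1 u hu).2.2.1, (hC.1 v hv).2.1]

theorem add_sub_one_le (hC : IsCopula C) {u v : ℝ} (hu : u ∈ Icc (0:ℝ) 1)
    (hv : v ∈ Icc (0:ℝ) 1) : u + v - 1 ≤ C u v := by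
  have h := hC.2 u 1 v 1 hu.1 hu.2 le_rfl hv.1 hv.2 le_rfl
  have h₀ := (hC.1 1 ⟨zero_le_one, le_rfl⟩).2.2.1
  linarith [(hC.1 u hu).2.2.1, (hC.1 v hv).2.2.2]

theorem mono_left (hC : IsCopula C) {u u' v : ℝ} (hu : u ∈ Icc (0:ℝ) 1)
    (hu' : u' ∈ Icc (0:ℝ) 1) (hv : v ∈ Icc (0:ℝ) 1) (h : u ≤ u') : C u v ≤ C u' v := by
  have h := hC.2 u u' 0 v hu.1 h hu'.2 le_rfl hv.1 hv.2
  linarith [(hC.1 u hu).1, (hC.1 u' hu').1]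

theorem mono_right (hC : IsCopula C) {u v v' : ℝ} (hu : u ∈ Icc (0:ℝ) 1)
    (hv : v ∈ Icc (0:ℝ) 1) (hv' : v' ∈ Icc (0:ℝ) 1) (h : v ≤ v') : C u v ≤ C u v' :=
  hC.transpose.mono_left hv hv' hu h

theorem sub_le_left (hC : IsCopula C) {u u' v : ℝ} (hu : u ∈ Icc (0:ℝ) 1)
    (hu' : u' ∈ Icc (0:ℝ) 1) (hv : v ∈ Icc (0:ℝ) 1) (h : u ≤ u') :
    C u' v - C u v ≤ u' - u := by
  have h := hC.2 u u' v 1 hu.1 h hu'.2 hv.1 hv.2 le_rfl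
  linarith [(hC.1 u hu).2.2.1, (hC.1 u' hu').2.2.1]

theorem sub_le_right (hC : IsCopula C) {u v v' : ℝ} (hu : u ∈ Icc (0:ℝ) 1)
    (hv : v ∈ Icc (0:ℝ) 1) (hv' : v' ∈ Icc (0:ℝ) 1) (h : v ≤ v') :
    C u v' - C u v ≤ v' - v :=
  hC.transpose.sub_le_left hv hv' hu h

theorem diag_intervalIntegrable (hC : IsCopula C) {p q : ℝ} (hp : 0 ≤ p) (hpq : p ≤ q)
    (hq : q ≤ 1) : IntervalIntegrable (fun u => C u u) volume p q := by
  apply MonotoneOn.intervalIntegrable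
  rw [uIcc_of_le hpq]
  intro u hu v hv huv
  have hu' : u ∈ Icc (0:ℝ) 1 := ⟨hp.trans hu.1, hu.2.trans hq⟩
  have hv' : v ∈ Icc (0:ℝ) 1 := ⟨hp.trans hv.1, hv.2.trans hq⟩
  exact (hC.mono_left hu' hv' hu' huv).trans (hC.mono_right hv' hu' hv' huv)

theorem integral_diag_le (hC : IsCopula C) (α β : ℝ) {p q : ℝ} (hp : 0 ≤ p) (hpq : p ≤ q)
    (hq : q ≤ 1) (h : ∀ u ∈ Icc p q, C u u ≤ α * u + β) :
    ∫ u in p..q, C u u ≤ α * (q ^ 2 - p ^ 2) / 2 + β * (q - p) := by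
  rw [← integral_affine]
  exact intervalIntegral.integral_mono_on hpq (hC.diag_intervalIntegrable hp hpq hq)
    (Continuous.intervalIntegrable (by fun_prop) _ _) h

theorem le_integral_diag (hC : IsCopula C) (α β : ℝ) {p q : ℝ} (hp : 0 ≤ p) (hpq : p ≤ q)
    (hq : q ≤ 1) (h : ∀ u ∈ Icc p q, α * u + β ≤ C u u) :
    α * (q ^ 2 - p ^ 2) / 2 + β * (q - p) ≤ ∫ u in p..q, C u u := by
  rw [← integral_affine]
  exact intervalIntegral.integral_mono_on hpq (Continuous.intervalIntegrable (by fun_prop) _ _)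
    (hC.diag_intervalIntegrable hp hpq hq) h

theorem integral_diag_split (hC : IsCopula C) {p q r : ℝ} (hp : 0 ≤ p) (hpq : p ≤ q)
    (hqr : q ≤ r) (hr : r ≤ 1) :
    ∫ u in p..r, C u u = (∫ u in p..q, C u u) + ∫ u in q..r, C u u :=
  (intervalIntegral.integral_add_adjacent_intervals
    (hC.diag_intervalIntegrable hp hpq (hqr.trans hr))
    (hC.diag_intervalIntegrable (hp.trans hpq) hqr hr)).symm

/-- An asymmetry of size `d` at `(a, b)` forces `a`, `b - a` and `1 - b` to be at least `d`. -/
theorem asymmetry_le (hC : IsCopula C) {a b : ℝ} (ha : a ∈ Icc (0:ℝ) 1) (hb : b ∈ Icc (0:ℝ) 1)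
    (hab : a ≤ b) :
    C a b - C b a ≤ a ∧ C a b - C b a ≤ b - a ∧ C a b - C b a ≤ 1 - b := by
  have h₁ := hC.le_left ha hb
  have h₂ := hC.nonneg hb ha
  have h₃ := hC.add_sub_one_le hb ha
  have h₄ := hC.sub_le_right ha ha hb hab
  have h₅ := hC.mono_left ha hb ha hab
  exact ⟨by linarith, by linarith, by linarith⟩

theorem integral_diag_le_of_asymmetry (hC : IsCopula C) {a b : ℝ} (ha : a ∈ Icc (0:ℝ) 1)
    (hb : b ∈ Icc (0:ℝ) 1) (hab : a ≤ b) (hd : 0 ≤ C a b - C b a) :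
    ∫ u in (0:ℝ)..1, C u u ≤ 1 / 2 - 2 * (C a b - C b a) ^ 2 := by
  obtain ⟨h₁, h₂, h₃⟩ := hC.asymmetry_le ha hb hab
  have hx := hC.le_left ha hb
  obtain ⟨d, hdef⟩ : ∃ d, d = C a b - C b a := ⟨_, rfl⟩
  rw [← hdef] at hd h₁ h₂ h₃ ⊢
  obtain ⟨ha₀, ha₁⟩ := id ha
  obtain ⟨hb₀, hb₁⟩ := id hb
  have i₁ := hC.integral_diag_le 1 0 (p := 0) (q := a - d) le_rfl (by linarith) (by linarith)
    fun u hu => by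
      have hu' : u ∈ Icc (0:ℝ) 1 := ⟨hu.1, by linarith [hu.2]⟩
      linarith [hC.le_left hu' hu']
  have i₂ := hC.integral_diag_le 0 (a - d) (p := a - d) (q := a) (by linarith) (by linarith)
    (by linarith) fun u hu => by
      have hu' : u ∈ Icc (0:ℝ) 1 := ⟨by linarith [hu.1], by linarith [hu.2]⟩
      linarith [hC.mono_left hu' hb hu' (hu.2.trans hab), hC.mono_right hb hu' ha hu.2]
  have i₃ := hC.integral_diag_le 1 (-d) (p := a) (q := b) (by linarith) (by linarith)
    (by linarith) fun u hu => by
      have hu' : u ∈ Icc (0:ℝ) 1 := ⟨by linarith [hu.1], by linarith [hu.2]⟩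
      linarith [hC.mono_left hu' hb hu' hu.2, hC.sub_le_right hb ha hu' hu.1]
  have i₄ := hC.integral_diag_le 2 (-b - d) (p := b) (q := b + d) (by linarith) (by linarith)
    (by linarith) fun u hu => by
      have hu' : u ∈ Icc (0:ℝ) 1 := ⟨by linarith [hu.1], by linarith [hu.2]⟩
      linarith [hC.sub_le_left hb hu' hu' hu.1, hC.sub_le_right hb ha hu' (hab.trans hu.1)]
  have i₅ := hC.integral_diag_le 1 0 (p := b + d) (q := 1) (by linarith) (by linarith) le_rfl
    fun u hu => by
      have hu' : u ∈ Icc (0:ℝ) 1 := ⟨by linarith [hu.1], hu.2⟩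
      linarith [hC.le_left hu' hu']
  rw [hC.integral_diag_split le_rfl (q := a - d) (by linarith) (by linarith) le_rfl,
    hC.integral_diag_split (p := a - d) (q := a) (by linarith) (by linarith) (by linarith) le_rfl,
    hC.integral_diag_split (p := a) (q := b) (by linarith) (by linarith) (by linarith) le_rfl,
    hC.integral_diag_split (p := b) (q := b + d) (by linarith) (by linarith) (by linarith) le_rfl]
  nlinarith [mul_nonneg hd (sub_nonneg.2 h₂)]

theorem le_integral_diag_of_asymmetry (hC : IsCopula C) {a b : ℝ} (ha : a ∈ Icc (0:ℝ) 1)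
    (hb : b ∈ Icc (0:ℝ) 1) (hab : a ≤ b) (hd : 1 / 4 ≤ C a b - C b a) :
    1 / 4 + (4 * (C a b - C b a) - 1) ^ 2 / 4 ≤ ∫ u in (0:ℝ)..1, C u u := by
  obtain ⟨h₁, h₂, h₃⟩ := hC.asymmetry_le ha hb hab
  have hy₀ := hC.nonneg hb ha
  have hy₁ := hC.add_sub_one_le hb ha
  obtain ⟨d, hdef⟩ : ∃ d, d = C a b - C b a := ⟨_, rfl⟩
  rw [← hdef] at hd h₁ h₂ h₃ ⊢
  have i₁ := hC.le_integral_diag 0 0 (p := 0) (q := 1 - 2 * d) le_rfl (by linarith) (by linarith)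
    fun u hu => by
      have hu' : u ∈ Icc (0:ℝ) 1 := ⟨hu.1, by linarith [hu.2]⟩
      linarith [hC.nonneg hu' hu']
  have i₂ := hC.le_integral_diag 1 (2 * d - 1) (p := 1 - 2 * d) (q := 2 * d) (by linarith)
    (by linarith) (by linarith) fun u hu => by
      obtain ⟨hu₁, hu₂⟩ := hu
      have hu' : u ∈ Icc (0:ℝ) 1 := ⟨by linarith, by linarith⟩
      rcases le_total u a with hua | hau
      · linarith [hC.sub_le_left hu' ha hb hua, hC.sub_le_right hu' hu' hb (hua.trans hab)]
      rcases le_total u b with hub | hbu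
      · linarith [hC.mono_left ha hu' hb hau, hC.sub_le_right hu' hu' hb hub]
      · linarith [hC.mono_left ha hu' hb hau, hC.mono_right hu' hb hu' hbu]
  have i₃ := hC.le_integral_diag 2 (-1) (p := 2 * d) (q := 1) (by linarith) (by linarith) le_rfl
    fun u hu => by
      have hu' : u ∈ Icc (0:ℝ) 1 := ⟨by linarith [hu.1], hu.2⟩
      linarith [hC.add_sub_one_le hu' hu']
  rw [hC.integral_diag_split le_rfl (q := 1 - 2 * d) (by linarith) (by linarith) le_rfl,
    hC.integral_diag_split (p := 1 - 2 * d) (q := 2 * d) (by linarith) (by linarith)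
      (by linarith) le_rfl]
  linarith

/-- The footrule bounds for an ordered pair at which the asymmetry is nonnegative. -/
theorem asymmetry_le_of_footrule (hC : IsCopula C) {a b : ℝ} (ha : a ∈ Icc (0:ℝ) 1)
    (hb : b ∈ Icc (0:ℝ) 1) (hab : a ≤ b) (hd : 0 ≤ C a b - C b a) :
    C a b - C b a ≤ (3 + √(3 + 6 * spearmanFootrule C)) / 12 ∧
      C a b - C b a ≤ √((1 - spearmanFootrule C) / 12) := by
  unfold spearmanFootrule
  constructor
  · rcases le_total (C a b - C b a) (1 / 4) with h | h
    · linarith [Real.sqrt_nonneg (3 + 6 * (6 * (∫ u in (0:ℝ)..1, C u u) - 2))]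
    · have hI := hC.le_integral_diag_of_asymmetry ha hb hab h
      have : 12 * (C a b - C b a) - 3 ≤ √(3 + 6 * (6 * (∫ u in (0:ℝ)..1, C u u) - 2)) :=
        Real.le_sqrt_of_sq_le (by linarith)
      linarith
  · have hI := hC.integral_diag_le_of_asymmetry ha hb hab hd
    exact Real.le_sqrt_of_sq_le (by linarith)

theorem abs_asymmetry_le_of_footrule (hC : IsCopula C) {a b : ℝ} (ha : a ∈ Icc (0:ℝ) 1)
    (hb : b ∈ Icc (0:ℝ) 1) (hab : a ≤ b) :
    |C a b - C b a| ≤ (3 + √(3 + 6 * spearmanFootrule C)) / 12 ∧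
      |C a b - C b a| ≤ √((1 - spearmanFootrule C) / 12) := by
  rcases le_total 0 (C a b - C b a) with h | h
  · rw [abs_of_nonneg h]
    exact hC.asymmetry_le_of_footrule ha hb hab h
  · rw [abs_of_nonpos h, neg_sub]
    exact hC.transpose.asymmetry_le_of_footrule ha hb hab (by linarith)

end IsCopula

theorem asymmetry_vs_footrule (C : ℝ → ℝ → ℝ) (f : ℝ) (hC : IsCopula C)
    (hf : f = spearmanFootrule C) :
    ∀ u ∈ Set.Icc (0:ℝ) 1, ∀ v ∈ Set.Icc (0:ℝ) 1,
      (-(1/2) ≤ f → f ≤ -(1/3) → |C u v - C v u| ≤ (3 + Real.sqrt (3 + 6 * f)) / 12) ∧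
      (-(1/3) ≤ f → f ≤ 1 → |C u v - C v u| ≤ Real.sqrt ((1 - f) / 12)) := by
  intro u hu v hv
  have key : |C u v - C v u| ≤ (3 + √(3 + 6 * f)) / 12 ∧
      |C u v - C v u| ≤ √((1 - f) / 12) := by
    rw [hf]
    rcases le_total u v with h | h
    · exact hC.abs_asymmetry_le_of_footrule hu hv h
    · rw [abs_sub_comm]
      exact hC.abs_asymmetry_le_of_footrule hv hu h
  exact ⟨fun _ _ => key.1, fun _ _ => key.2⟩
end
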